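/- Every semi-equivelar map M of type {3^6} on the Klein bottle contains a cycle of type A. -/

import Mathlib

/-!
A combinatorial (flag) model of polyhedral maps on surfaces.

A map on a compact surface is encoded by its set of flags (incident
vertex-edge-face triples) together with three involutions `s0`, `s1`, `s2`,
changing respectively the vertex, the edge and the face of a flag.
Vertices, edges and faces of the map are the orbits of the pairs
`{s1, s2}`, `{s0, s2}` and `{s0, s1}` respectively.  For a map on a closed
surface all three involutions are fixed-point free; fixed points of `s2`
correspond to boundary flags of a surface with boundary.  By the
classification of compact surfaces, the underlying surface is the Klein
bottle if and only if the map is connected, closed, has Euler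
characteristic `0` and is non-orientable; a compact connected surface with
non-empty boundary and Euler characteristic `0` is a cylinder (annulus) if
it is orientable and a Möbius strip otherwise.
-/

/-- The raw data of a combinatorial map: a finite set of flags together with
three permutations (intended to be the three flag involutions). -/
structure PreMap where
  flag : Type
  fintype : Fintype flag
  s0 : Equiv.Perm flag
  s1 : Equiv.Perm flag
  s2 : Equiv.Perm flag

attribute [instance] PreMap.fintype

namespace PreMap

variable (M : PreMap)

/-- Generating relation for "the two flags belong to the same vertex". -/
def vRel : M.flag → M.flag → Prop := fun f g => g = M.s1 f ∨ g = M.s2 f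

/-- Generating relation for "the two flags belong to the same edge". -/
def eRel : M.flag → M.flag → Prop := fun f g => g = M.s0 f ∨ g = M.s2 f

/-- Generating relation for "the two flags belong to the same face". -/
def fRel : M.flag → M.flag → Prop := fun f g => g = M.s0 f ∨ g = M.s1 f

/-- The vertices of a map: orbits of flags under `⟨s1, s2⟩`. -/
def VertexOf : Type := Quot M.vRel

/-- The edges of a map: orbits of flags under `⟨s0, s2⟩`. -/
def EdgeOf : Type := Quot M.eRel

/-- The faces of a map: orbits of flags under `⟨s0, s1⟩`. -/
def FaceOf : Type := Quot M.fRel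

/-- The vertex a flag belongs to. -/
def vertexOfFlag (f : M.flag) : M.VertexOf := Quot.mk _ f

/-- The edge a flag belongs to. -/
def edgeOfFlag (f : M.flag) : M.EdgeOf := Quot.mk _ f

/-- The face a flag belongs to. -/
def faceOfFlag (f : M.flag) : M.FaceOf := Quot.mk _ f

/-- Two flags are incident to the same vertex. -/
def SameVertex (f g : M.flag) : Prop := M.vertexOfFlag f = M.vertexOfFlag g

/-- Two flags are incident to the same edge. -/
def SameEdge (f g : M.flag) : Prop := M.edgeOfFlag f = M.edgeOfFlag g

/-- Two flags are incident to the same face. -/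
def SameFace (f g : M.flag) : Prop := M.faceOfFlag f = M.faceOfFlag g

/-- The number of vertices of a map. -/
noncomputable def nV : ℕ := Nat.card M.VertexOf

/-- The number of edges of a map. -/
noncomputable def nE : ℕ := Nat.card M.EdgeOf

/-- The number of faces of a map. -/
noncomputable def nF : ℕ := Nat.card M.FaceOf

/-- The Euler characteristic `V - E + F` of a map. -/
noncomputable def euler : ℤ := (M.nV : ℤ) - (M.nE : ℤ) + (M.nF : ℤ)

/-- A map is connected if any two flags are joined by a chain of the three
involutions. -/
def Connected : Prop :=
  ∀ f g : M.flag, Relation.EqvGen (fun a b => b = M.s0 a ∨ b = M.s1 a ∨ b = M.s2 a) f g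

/-- A map is orientable if its flags can be properly `2`-coloured, the
colour being switched by each involution (boundary flags, i.e. fixed points
of `s2`, excepted). -/
def Orientable : Prop :=
  ∃ c : M.flag → Bool, (∀ f, c (M.s0 f) ≠ c f) ∧ (∀ f, c (M.s1 f) ≠ c f) ∧
    (∀ f, M.s2 f ≠ f → c (M.s2 f) ≠ c f)

/-- The axioms of a combinatorial map on a closed surface: the three
permutations are fixed-point-free involutions, `s0` and `s2` commute and
their product is fixed-point free, and the map is connected and nonempty. -/
def IsClosedSurfaceMap : Prop :=
  Nonempty M.flag ∧
  (∀ f, M.s0 (M.s0 f) = f) ∧ (∀ f, M.s1 (M.s1 f) = f) ∧ (∀ f, M.s2 (M.s2 f) = f) ∧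
  (∀ f, M.s0 f ≠ f) ∧ (∀ f, M.s1 f ≠ f) ∧ (∀ f, M.s2 f ≠ f) ∧
  (∀ f, M.s0 (M.s2 f) = M.s2 (M.s0 f)) ∧ (∀ f, M.s0 (M.s2 f) ≠ f) ∧
  M.Connected

/-- The axioms of a combinatorial map on a compact surface with (possibly
empty) boundary: fixed points of `s2` are the boundary flags. -/
def IsMapWithBoundary : Prop :=
  Nonempty M.flag ∧
  (∀ f, M.s0 (M.s0 f) = f) ∧ (∀ f, M.s1 (M.s1 f) = f) ∧ (∀ f, M.s2 (M.s2 f) = f) ∧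
  (∀ f, M.s0 f ≠ f) ∧ (∀ f, M.s1 f ≠ f) ∧
  (∀ f, M.s0 (M.s2 f) = M.s2 (M.s0 f)) ∧
  M.Connected

/-- Polyhedrality: faces are embedded closed `2`-cells (each vertex and each
edge occurs at most once on the boundary of a face) and the link of every
vertex is a cycle.  Within one face, two flags at the same vertex are equal or
`s1`-related, two flags on the same edge are equal or `s0`-related; around one
vertex two flags on the same edge are equal or `s2`-related. -/
def IsPolyhedral : Prop :=
  (∀ f g, M.SameFace f g → M.SameVertex f g → g = f ∨ g = M.s1 f) ∧
  (∀ f g, M.SameFace f g → M.SameEdge f g → g = f ∨ g = M.s0 f) ∧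
  (∀ f g, M.SameVertex f g → M.SameEdge f g → g = f ∨ g = M.s2 f)

/-- A polyhedral map on the Klein bottle: a connected closed polyhedral map
with Euler characteristic `0` on a non-orientable surface. -/
def IsKleinBottleMap : Prop :=
  M.IsClosedSurfaceMap ∧ M.IsPolyhedral ∧ M.euler = 0 ∧ ¬ M.Orientable

/-- The number of sides of the face containing a flag (a `d`-gon carries
`2 * d` flags). -/
noncomputable def faceDeg (f : M.flag) : ℕ := Nat.card {g : M.flag // M.SameFace f g} / 2

/-- The degree of the vertex containing a flag (a vertex of degree `q`
carries `2 * q` flags). -/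
noncomputable def vertexDeg (f : M.flag) : ℕ := Nat.card {g : M.flag // M.SameVertex f g} / 2

/-- `M.HasVertexType L` says that `M` is semi-equivelar with face sequence
`L`: reading the sizes of the faces in cyclic order around any vertex
(by iterating the corner rotation `s1 * s2` from a suitable starting flag at
that vertex) yields exactly the list `L`. -/
def HasVertexType (L : List ℕ) : Prop :=
  ∀ f : M.flag, ∃ g : M.flag, M.SameVertex f g ∧ M.vertexDeg g = L.length ∧
    ∀ i : Fin L.length, M.faceDeg (((M.s1 * M.s2) ^ (i : ℕ)) g) = L.get i

end PreMap

/-- Isomorphism of maps: a bijection of flags commuting with the three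
involutions (this is the combinatorial counterpart of a homeomorphism of the
surface sending vertices to vertices, edges to edges and faces to faces and
preserving incidences). -/
def MapIso (M N : PreMap) : Prop :=
  ∃ e : M.flag ≃ N.flag,
    (∀ f, e (M.s0 f) = N.s0 (e f)) ∧ (∀ f, e (M.s1 f) = N.s1 (e f)) ∧
    (∀ f, e (M.s2 f) = N.s2 (e f))

/-- The semi-equivelar maps of vertex type `L` with `n` vertices on the Klein
bottle. -/
def SEKMap (L : List ℕ) (n : ℕ) : Type 1 :=
  {M : PreMap // M.IsKleinBottleMap ∧ M.HasVertexType L ∧ M.nV = n}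

/-- `iKlein L n`: the number of isomorphism classes of semi-equivelar maps of
vertex type `L` on the Klein bottle with `n` vertices. -/
noncomputable def iKlein (L : List ℕ) (n : ℕ) : ℕ :=
  Nat.card (Quot (fun M N : SEKMap L n => MapIso M.1 N.1))

/-! ### Submaps, cylinders and Möbius strips -/

open Classical in
/-- The involution `σ` adjusted to a set `S`: it agrees with `σ` on the pairs
`{x, σ x}` that do not cross the boundary of `S`, and fixes the crossing
elements.  This restricts to `S` and to its complement. -/
noncomputable def adjustInvol {α : Type} (σ : Equiv.Perm α) (S : Set α)
    (h : ∀ x, σ (σ x) = x) : Equiv.Perm α :=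
  Function.Involutive.toPerm (fun x => if x ∈ S ↔ σ x ∈ S then σ x else x)
    (by
      intro x
      by_cases hx : x ∈ S ↔ σ x ∈ S
      · have hσx : σ x ∈ S ↔ σ (σ x) ∈ S := by rw [h x]; exact hx.symm
        simp only [if_pos hx, h x, if_pos (Iff.symm hx)]
      · simp only [if_neg hx])

open Classical in
theorem adjustInvol_mem {α : Type} (σ : Equiv.Perm α) (S : Set α)
    (h : ∀ x, σ (σ x) = x) : ∀ x, x ∈ S ↔ adjustInvol σ S h x ∈ S := by
  intro x
  have hx' : adjustInvol σ S h x = if x ∈ S ↔ σ x ∈ S then σ x else x := rfl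
  rw [hx']
  by_cases hx : x ∈ S ↔ σ x ∈ S
  · simp only [if_pos hx]; exact hx
  · simp only [if_neg hx]

open Classical in
/-- Restriction of an involution `σ` to a subset `S`, fixing the flags whose
`σ`-image leaves `S` (these become boundary flags). -/
noncomputable def restrictInvol {α : Type} (σ : Equiv.Perm α) (S : Set α) :
    Equiv.Perm S :=
  if h : ∀ x, σ (σ x) = x then
    Equiv.Perm.subtypePerm (adjustInvol σ S h) (fun x => (adjustInvol_mem σ S h x).symm)
  else 1

namespace PreMap

/-- The submap of `M` carried by a set `S` of flags (intended: `S` a union of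
closed faces).  Flags whose `s2`-image leaves `S` become boundary flags. -/
noncomputable def subMap (M : PreMap) (S : Set M.flag) : PreMap where
  flag := S
  fintype := (Set.toFinite S).fintype
  s0 := restrictInvol M.s0 S
  s1 := restrictInvol M.s1 S
  s2 := restrictInvol M.s2 S

/-- A combinatorial cylinder (annulus): a compact connected orientable map
with non-empty boundary and Euler characteristic `0`. -/
def IsCylinder (N : PreMap) : Prop :=
  N.IsMapWithBoundary ∧ N.Orientable ∧ N.euler = 0 ∧ ∃ f, N.s2 f = f

/-- A combinatorial Möbius strip: a compact connected non-orientable map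
with non-empty boundary and Euler characteristic `0`. -/
def IsMobius (N : PreMap) : Prop :=
  N.IsMapWithBoundary ∧ ¬ N.Orientable ∧ N.euler = 0 ∧ ∃ f, N.s2 f = f

/-- The number of boundary vertices of a map with boundary. -/
noncomputable def nBdryV (N : PreMap) : ℕ :=
  Nat.card {v : N.VertexOf // ∃ f : N.flag, N.s2 f = f ∧ N.vertexOfFlag f = v}

/-- One step of the straight-ahead walk in a `{3^6}` map: rotate three
corners around the vertex (to the opposite edge), then cross it.  Paths of
type `A` are the orbits of this permutation. -/
def stepA (M : PreMap) : Equiv.Perm M.flag := (M.s1 * M.s2) ^ 3 * M.s0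

/-- One step of the straight-ahead walk in a `{4^4}` map.  Paths of type `B`
are the orbits of this permutation. -/
def stepB (M : PreMap) : Equiv.Perm M.flag := (M.s1 * M.s2) ^ 2 * M.s0

/-- `M.IsCycleTypeA k f`: the straight-ahead (type `A`) walk starting at the
flag `f` in a `{3^6}` map closes up after `k` steps (possibly with a twist)
and visits `k` pairwise distinct vertices, i.e. it is a cycle of type `A` of
length `k`. -/
def IsCycleTypeA (M : PreMap) (k : ℕ) (f : M.flag) : Prop :=
  1 ≤ k ∧ ((M.stepA ^ k) f = f ∨ (M.stepA ^ k) f = M.s2 f) ∧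
  ∀ i j : Fin k, M.SameVertex ((M.stepA ^ (i : ℕ)) f) ((M.stepA ^ (j : ℕ)) f) → i = j

/-- A cycle of type `B` in a `{4^4}` map; see `IsCycleTypeA`. -/
def IsCycleTypeB (M : PreMap) (k : ℕ) (f : M.flag) : Prop :=
  1 ≤ k ∧ ((M.stepB ^ k) f = f ∨ (M.stepB ^ k) f = M.s2 f) ∧
  ∀ i j : Fin k, M.SameVertex ((M.stepB ^ (i : ℕ)) f) ((M.stepB ^ (j : ℕ)) f) → i = j

/-- Two vertices of a map joined by an edge. -/
def AdjV (M : PreMap) (v w : M.VertexOf) : Prop :=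
  ∃ f : M.flag, M.vertexOfFlag f = v ∧ M.vertexOfFlag (M.s0 f) = w

end PreMap

/-- The generating relation of the Klein-bottle lattice identifications with
parameters `r`, `s`, `k`: horizontal period `r`, and vertical gluing
`(x, y) ↦ (k - x, y + s)` (a shift by `k` together with a reversal of the
horizontal orientation). -/
def kleinShift (r s k : ℤ) (p q : ℤ × ℤ) : Prop :=
  q = (p.1 + r, p.2) ∨ q = (k - p.1, p.2 + s)

namespace PreMap

/-- `M.IsPlanarKRep r s k`: the map `M` admits a planar polyhedral
`(r, s, k)`-representation `K(r, s, k)`, bounded by two identical cycles with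
opposite orientations: there is a system of `s` distinguished horizontal rows
of `r` vertices each, indexed by the plane lattice modulo the Klein-bottle
identifications `kleinShift r s k`, each row being a cycle and consecutive
rows being joined by an edge. -/
def IsPlanarKRep (M : PreMap) (r s k : ℕ) : Prop :=
  ∃ ℓ : ℤ × ℤ → M.VertexOf,
    (∀ p q : ℤ × ℤ, Relation.EqvGen (kleinShift (r : ℤ) (s : ℤ) (k : ℤ)) p q ↔ ℓ p = ℓ q) ∧
    (∀ x y : ℤ, M.AdjV (ℓ (x, y)) (ℓ (x + 1, y))) ∧
    (∀ y : ℤ, ∃ x x' : ℤ, M.AdjV (ℓ (x, y)) (ℓ (x', y + 1)))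

/-- `M.IsMobiusKRep r s`: the map `M` admits a representation `K(r, s)`
bounded by two Möbius strips: it decomposes into a cylinder containing `s`
distinguished cycles of length `r` and two Möbius strips whose boundary
cycles (of length `r`) are the two boundary cycles of the cylinder. -/
def IsMobiusKRep (M : PreMap) (r s : ℕ) : Prop :=
  ∃ S S' S'' : Set M.flag,
    (∀ g, g ∈ S ∨ g ∈ S' ∨ g ∈ S'') ∧
    Disjoint S S' ∧ Disjoint S S'' ∧ Disjoint S' S'' ∧
    (M.subMap S).IsCylinder ∧ (M.subMap S').IsMobius ∧ (M.subMap S'').IsMobius ∧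
    (M.subMap S').nBdryV = r ∧ (M.subMap S'').nBdryV = r ∧
    (M.subMap S).nV = r * s

/-- `M.HasRSK36 r s k`: a `(r, s, k)`-representation `K(r, s, k)` of a map of
type `{3^6}`: the vertices are exactly the plane lattice modulo the
Klein-bottle identifications `kleinShift r s k`, the horizontal rows are
cycles of type `A` of length `r` and the lattice adjacencies are edges. -/
def HasRSK36 (M : PreMap) (r s k : ℕ) : Prop :=
  ∃ ℓ : ℤ × ℤ → M.VertexOf,
    Function.Surjective ℓ ∧
    (∀ p q : ℤ × ℤ, Relation.EqvGen (kleinShift (r : ℤ) (s : ℤ) (k : ℤ)) p q ↔ ℓ p = ℓ q) ∧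
    (∀ x y : ℤ, M.AdjV (ℓ (x, y)) (ℓ (x + 1, y)) ∧ M.AdjV (ℓ (x, y)) (ℓ (x, y + 1))) ∧
    (∀ y : ℤ, ∃ f : M.flag, M.IsCycleTypeA r f ∧
      ∀ i : Fin r, ∃ x : ℤ, M.vertexOfFlag ((M.stepA ^ (i : ℕ)) f) = ℓ (x, y))

/-- `M.HasRSK44 r s k`: a `(r, s, k)`-representation of a map of type
`{4^4}`; as `HasRSK36`, with rows the cycles of type `B`. -/
def HasRSK44 (M : PreMap) (r s k : ℕ) : Prop :=
  ∃ ℓ : ℤ × ℤ → M.VertexOf,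
    Function.Surjective ℓ ∧
    (∀ p q : ℤ × ℤ, Relation.EqvGen (kleinShift (r : ℤ) (s : ℤ) (k : ℤ)) p q ↔ ℓ p = ℓ q) ∧
    (∀ x y : ℤ, M.AdjV (ℓ (x, y)) (ℓ (x + 1, y)) ∧ M.AdjV (ℓ (x, y)) (ℓ (x, y + 1))) ∧
    (∀ y : ℤ, ∃ f : M.flag, M.IsCycleTypeB r f ∧
      ∀ i : Fin r, ∃ x : ℤ, M.vertexOfFlag ((M.stepB ^ (i : ℕ)) f) = ℓ (x, y))

/-- `M.HasKLT36 l t`: a representation `K(S'(M), 𝓜', 𝓜'') = K(l, t)` of a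
map of type `{3^6}`: a decomposition into a cylinder and two Möbius strips
whose boundary cycles are cycles of type `A` of length `l`, the cylinder
containing `t` such cycles (so that `n = l * t`). -/
def HasKLT36 (M : PreMap) (l t : ℕ) : Prop :=
  ∃ (S S' S'' : Set M.flag) (f f' : M.flag),
    (∀ g, g ∈ S ∨ g ∈ S' ∨ g ∈ S'') ∧
    Disjoint S S' ∧ Disjoint S S'' ∧ Disjoint S' S'' ∧
    (M.subMap S).IsCylinder ∧ (M.subMap S').IsMobius ∧ (M.subMap S'').IsMobius ∧
    M.IsCycleTypeA l f ∧ M.IsCycleTypeA l f' ∧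
    (∀ g ∈ S', M.s2 g ∉ S' → ∃ i < l, M.SameVertex g ((M.stepA ^ i) f)) ∧
    (∀ g ∈ S'', M.s2 g ∉ S'' → ∃ i < l, M.SameVertex g ((M.stepA ^ i) f')) ∧
    M.nV = l * t

end PreMap

/-- The eleven semi-equivelar vertex types on the torus and Klein bottle. -/
def elevenTypes : List (List ℕ) :=
  [[3, 3, 3, 3, 3, 3], [4, 4, 4, 4], [6, 6, 6], [3, 3, 3, 4, 4], [3, 3, 4, 3, 4],
   [3, 6, 3, 6], [3, 3, 3, 3, 6], [4, 8, 8], [3, 12, 12], [4, 6, 12], [3, 4, 6, 4]]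

/-!
The three flag involutions of a map of type `{3^6}` satisfy the relations of the reflection group
`[3, 6]` of the triangular lattice, so that group acts on the flags, and up to the reflection `s2`
in the line of travel each step of the straight walk is a unit translation. Suppose the walk from
`f` meets a vertex twice. The coincidence yields an isometry in the stabilizer of `f`, which cannot
be a rotation because rotations fix no flag. Translations and glide reflections along the walk close
it up, reflections perpendicular to the walk are excluded because they are conjugate to `s0`
or `s1`, and no other glide direction occurs if the starting direction is chosen well: all the glide
reflections in one stabilizer have parallel axes, as the product of two with different directions
would be a rotation. Hence the walk closes up at its first return, which gives a cycle.
-/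

section Dihedral

variable {G : Type*} [Group G] {n : ℕ}

theorem zpow_eq_zpow_of_intCast_eq {g : G} (hg : g ^ n = 1) {k l : ℤ}
    (h : (k : ZMod n) = l) : g ^ k = g ^ l := by
  obtain ⟨m, hm⟩ := (ZMod.intCast_eq_intCast_iff_dvd_sub k l n).1 h
  rw [eq_add_of_sub_eq' hm, zpow_add, zpow_mul, zpow_natCast, hg, one_zpow, mul_one]

theorem semiconjBy_mul_of_involutions {a b : G} (ha : a * a = 1) (hb : b * b = 1) :
    SemiconjBy b (a * b) (a * b)⁻¹ := by
  rw [SemiconjBy, mul_inv_rev, inv_eq_of_mul_eq_one_left ha, inv_eq_of_mul_eq_one_left hb,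
    mul_assoc]

theorem mul_zpow_of_involutions {a b : G} (ha : a * a = 1) (hb : b * b = 1) (k : ℤ) :
    b * (a * b) ^ k = (a * b) ^ (-k) * b := by
  rw [((semiconjBy_mul_of_involutions ha hb).zpow_right k).eq, inv_zpow']

/-- The universal property of the dihedral group: two involutions `a`, `b` with `(a * b) ^ n = 1`
induce a homomorphism sending the rotation `r 1` to `a * b` and the reflection `sr 0` to `b`.
For `n = 0` the source is the infinite dihedral group and the last condition is void. -/
def dihedralLift (a b : G) (ha : a * a = 1) (hb : b * b = 1) (hab : (a * b) ^ n = 1) :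
    DihedralGroup n →* G :=
  MonoidHom.mk' (fun
    | .r i => (a * b) ^ (i.cast : ℤ)
    | .sr i => b * (a * b) ^ (i.cast : ℤ)) <| by
    have conj := mul_zpow_of_involutions ha hb
    rintro (i | i) (j | j)
    · simp only [DihedralGroup.r_mul_r, ← zpow_add]
      exact zpow_eq_zpow_of_intCast_eq hab (by simp)
    · simp only [DihedralGroup.r_mul_sr]
      rw [← mul_assoc, ← neg_neg (i.cast : ℤ), ← conj, mul_assoc, ← zpow_add]
      exact congrArg (b * ·) (zpow_eq_zpow_of_intCast_eq hab (by simp [sub_eq_neg_add]))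
    · simp only [DihedralGroup.sr_mul_r, mul_assoc, ← zpow_add]
      exact congrArg (b * ·) (zpow_eq_zpow_of_intCast_eq hab (by simp))
    · simp only [DihedralGroup.sr_mul_sr]
      rw [conj, mul_assoc, ← mul_assoc b, hb, one_mul, ← zpow_add]
      exact zpow_eq_zpow_of_intCast_eq hab (by simp [sub_eq_neg_add])

variable {a b : G} (ha : a * a = 1) (hb : b * b = 1) (hab : (a * b) ^ n = 1)

theorem dihedralLift_r_intCast (k : ℤ) :
    dihedralLift a b ha hb hab (.r k) = (a * b) ^ k :=
  zpow_eq_zpow_of_intCast_eq hab (by simp)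

theorem dihedralLift_sr_intCast (k : ℤ) :
    dihedralLift a b ha hb hab (.sr k) = b * (a * b) ^ k :=
  congrArg (b * ·) (zpow_eq_zpow_of_intCast_eq hab (by simp))

theorem dihedralLift_sr_zero : dihedralLift a b ha hb hab (.sr 0) = b := by
  simpa using dihedralLift_sr_intCast ha hb hab 0

theorem range_dihedralLift : (dihedralLift a b ha hb hab).range = Subgroup.closure {a, b} := by
  have mem_a : a ∈ Subgroup.closure {a, b} := Subgroup.subset_closure (by simp)
  have mem_b : b ∈ Subgroup.closure {a, b} := Subgroup.subset_closure (by simp)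
  apply le_antisymm
  · rintro _ ⟨i | i, rfl⟩
    · exact zpow_mem (mul_mem mem_a mem_b) _
    · exact mul_mem mem_b (zpow_mem (mul_mem mem_a mem_b) _)
  · rw [Subgroup.closure_le]
    rintro x (rfl | rfl)
    · exact ⟨.r (1 : ℤ) * .sr 0, by
        rw [map_mul, dihedralLift_r_intCast, dihedralLift_sr_zero, zpow_one, mul_assoc, hb,
          mul_one]⟩
    · exact ⟨.sr 0, dihedralLift_sr_zero ..⟩

end Dihedral

section FixedPoints

open MulAction

variable {G α : Type*} [Group G] [MulAction G α]

theorem fixedBy_eq_empty_iff_of_semiconjBy {c g h : G} (hc : SemiconjBy c g h) :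
    fixedBy α g = ∅ ↔ fixedBy α h = ∅ := by
  rw [eq_mul_inv_of_mul_eq hc.eq.symm, ← smul_fixedBy, Set.smul_set_eq_empty]

theorem fixedBy_dihedralLift_sr {n : ℕ} {a b : G} (ha : a * a = 1) (hb : b * b = 1)
    (hab : (a * b) ^ n = 1) (fix_a : fixedBy α a = ∅) (fix_b : fixedBy α b = ∅) (i : ZMod n) :
    fixedBy α (dihedralLift a b ha hb hab (.sr i)) = ∅ := by
  set D := dihedralLift a b ha hb hab
  have shift (l j : ZMod n) :
      fixedBy α (D (.sr j)) = ∅ ↔ fixedBy α (D (.sr (j - l - l))) = ∅ :=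
    fixedBy_eq_empty_iff_of_semiconjBy (c := D (.r l)) <| by
      rw [SemiconjBy, ← map_mul, ← map_mul, DihedralGroup.r_mul_sr, DihedralGroup.sr_mul_r,
        sub_add_cancel]
  obtain ⟨k, rfl⟩ := ZMod.intCast_surjective i
  obtain ⟨m, rfl | rfl⟩ := Int.even_or_odd' k
  · rw [shift m]
    simpa [two_mul, D, dihedralLift_sr_zero] using fix_b
  · have b_semiconj : SemiconjBy b a (D (.sr (1 : ℤ))) := by
      rw [SemiconjBy, dihedralLift_sr_intCast, zpow_one, mul_assoc, mul_assoc, hb, mul_one]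
    rw [shift m, show ((2 * m + 1 : ℤ) : ZMod n) - m - m = (1 : ℤ) by push_cast; ring,
      ← fixedBy_eq_empty_iff_of_semiconjBy b_semiconj]
    exact fix_a

end FixedPoints

section PairOrbits

open MulAction

variable {α : Type*} {a b : Equiv.Perm α}

theorem quot_mk_eq_iff_mem_orbit_closure (f g : α) :
    Quot.mk (fun x y => y = a x ∨ y = b x) f = Quot.mk _ g ↔
      g ∈ orbit (Subgroup.closure {a, b}) f := by
  constructor
  · let toOrbit : Quot (fun x y => y = a x ∨ y = b x) → Set α :=
      Quot.lift (orbit (Subgroup.closure {a, b})) <| by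
        rintro x _ (rfl | rfl) <;> refine (orbit_eq_iff.2 ?_).symm
        · exact ⟨⟨a, Subgroup.subset_closure (by simp)⟩, rfl⟩
        · exact ⟨⟨b, Subgroup.subset_closure (by simp)⟩, rfl⟩
    intro h
    have same_orbit : orbit (Subgroup.closure {a, b}) f = orbit (Subgroup.closure {a, b}) g :=
      congrArg toOrbit h
    exact same_orbit ▸ mem_orbit_self g
  · have invariant (σ : Equiv.Perm α) (hσ : σ ∈ Subgroup.closure {a, b}) :
        ∀ x, Quot.mk (fun x y => y = a x ∨ y = b x) (σ x) = Quot.mk _ x := by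
      induction hσ using Subgroup.closure_induction with
      | mem σ hσ =>
        refine fun x => (Quot.sound ?_).symm
        rcases hσ with hσ | hσ
        exacts [Or.inl (congrFun (congrArg _ hσ) x), Or.inr (congrFun (congrArg _ hσ) x)]
      | one => exact fun x => rfl
      | mul σ τ _ _ ihσ ihτ => exact fun x => (ihσ (τ x)).trans (ihτ x)
      | inv σ _ ih => exact fun x => by simpa using (ih (σ⁻¹ x)).symm
    rintro ⟨⟨σ, hσ⟩, rfl⟩
    exact (invariant σ hσ f).symm

theorem quot_mk_eq_iff_exists_dihedralLift {n : ℕ} (ha : a * a = 1) (hb : b * b = 1)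
    (hab : (a * b) ^ n = 1) (f g : α) :
    Quot.mk (fun x y => y = a x ∨ y = b x) f = Quot.mk _ g ↔
      ∃ d, dihedralLift a b ha hb hab d f = g := by
  rw [quot_mk_eq_iff_mem_orbit_closure, ← range_dihedralLift ha hb hab]
  exact ⟨fun ⟨⟨_, d, hd⟩, h⟩ => ⟨d, hd ▸ h⟩, fun ⟨d, h⟩ => ⟨⟨_, d, rfl⟩, h⟩⟩

theorem quot_mk_eq_iff_exists_zpow (ha : a * a = 1) (hb : b * b = 1) (f g : α) :
    Quot.mk (fun x y => y = a x ∨ y = b x) f = Quot.mk _ g ↔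
      ∃ k : ℤ, ((a * b) ^ k) f = g ∨ b (((a * b) ^ k) f) = g := by
  rw [quot_mk_eq_iff_exists_dihedralLift ha hb (pow_zero _)]
  constructor
  · rintro ⟨k | k, h⟩
    exacts [⟨k, Or.inl h⟩, ⟨k, Or.inr h⟩]
  · rintro ⟨k, h | h⟩
    exacts [⟨.r k, h⟩, ⟨.sr k, h⟩]

theorem nat_card_quot_mk_eq [Finite α] (ha : a * a = 1) (hb : b * b = 1)
    (fix_a : fixedBy α a = ∅) (fix_b : fixedBy α b = ∅) (f : α) :
    Nat.card {g // Quot.mk (fun x y => y = a x ∨ y = b x) f = Quot.mk _ g} =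
      2 * Function.minimalPeriod (a * b) f := by
  set O : Set α := orbit (Subgroup.zpowers (a * b)) f
  have mem_O (g : α) : g ∈ O ↔ ∃ k : ℤ, ((a * b) ^ k) f = g :=
    ⟨by rintro ⟨⟨_, k, rfl⟩, h⟩; exact ⟨k, h⟩, fun ⟨k, h⟩ => ⟨⟨_, k, rfl⟩, h⟩⟩
  have class_eq : {g | Quot.mk (fun x y => y = a x ∨ y = b x) f = Quot.mk _ g} = O ∪ b '' O := by
    ext g
    simp only [Set.mem_ofPred_eq, quot_mk_eq_iff_exists_zpow ha hb, exists_or, Set.mem_union,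
      Set.mem_image, mem_O, exists_exists_eq_and]
  have disjoint : Disjoint O (b '' O) := by
    simp only [Set.disjoint_left, Set.mem_image, mem_O]
    rintro _ ⟨k, rfl⟩ ⟨_, ⟨l, rfl⟩, h⟩
    have reflection_free :=
      fixedBy_dihedralLift_sr ha hb (pow_zero _) fix_a fix_b (Int.cast (l + k))
    refine Set.notMem_empty f (reflection_free ▸ ?_)
    rw [mem_fixedBy, dihedralLift_sr_intCast, add_comm, zpow_add, ← mul_assoc,
      mul_zpow_of_involutions ha hb, mul_assoc, mul_smul, mul_smul]
    simp only [Equiv.Perm.smul_def]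
    rw [h, zpow_neg, Equiv.Perm.inv_eq_iff_eq]
  have card_O : O.ncard = Function.minimalPeriod (a * b) f := by
    have := Fintype.ofFinite O
    rw [← Nat.card_coe_set_eq, Nat.card_eq_fintype_card]
    exact (minimalPeriod_eq_card (a := a * b) (b := f)).symm
  change Set.ncard {g | Quot.mk (fun x y => y = a x ∨ y = b x) f = Quot.mk _ g} = _
  rw [class_eq, Set.ncard_union_eq disjoint, Set.ncard_image_of_injective _ b.injective, card_O,
    two_mul]

end PairOrbits

/-- Three elements of a group satisfying the Coxeter relations of the `[3, 6]` reflection group,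
the full symmetry group of the triangular lattice. As for flags, `s0`, `s1` and `s2` are thought of
as changing the vertex, the edge and the face. -/
structure TriangleSystem (G : Type*) [Group G] where
  s0 : G
  s1 : G
  s2 : G
  s0_mul_s0 : s0 * s0 = 1
  s1_mul_s1 : s1 * s1 = 1
  s2_mul_s2 : s2 * s2 = 1
  commute_s0_s2 : Commute s0 s2
  s0_mul_s1_pow_three : (s0 * s1) ^ 3 = 1
  s1_mul_s2_pow_six : (s1 * s2) ^ 6 = 1

namespace TriangleSystem

section Lattice

variable {G : Type*} [Group G] (S : TriangleSystem G)

/-- The rotation by one corner about the base vertex. -/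
def rot : G := S.s1 * S.s2

/-- The translation along the base edge: the half turn about the midpoint of that edge followed by
the half turn about the base vertex. -/
def unitTranslation : G := S.rot ^ 3 * (S.s0 * S.s2)

/-- The rotate of the unit translation by one corner. -/
def rotatedTranslation : G := S.rot * S.unitTranslation * S.rot⁻¹

/-- The lattice vector with coordinates `(x, y)` in the basis formed by the unit translation and
its rotate. -/
def translation (x y : ℤ) : G := S.unitTranslation ^ x * S.rotatedTranslation ^ y

theorem inv_s0 : S.s0⁻¹ = S.s0 := inv_eq_of_mul_eq_one_left S.s0_mul_s0

theorem inv_s1 : S.s1⁻¹ = S.s1 := inv_eq_of_mul_eq_one_left S.s1_mul_s1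

theorem inv_s2 : S.s2⁻¹ = S.s2 := inv_eq_of_mul_eq_one_left S.s2_mul_s2

theorem rot_pow_five : S.rot ^ 5 = S.s2 * S.s1 := by
  rw [← inv_inj, mul_inv_rev, S.inv_s1, S.inv_s2, inv_eq_iff_mul_eq_one, ← rot, ← pow_succ]
  exact S.s1_mul_s2_pow_six

theorem inv_rot_cubed : (S.rot ^ 3)⁻¹ = S.rot ^ 3 :=
  inv_eq_of_mul_eq_one_left (by rw [← pow_add]; exact S.s1_mul_s2_pow_six)

theorem commute_s2_rot_cubed : Commute S.s2 (S.rot ^ 3) := by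
  have h := (semiconjBy_mul_of_involutions S.s1_mul_s1 S.s2_mul_s2).pow_right 3
  rwa [inv_pow, ← rot, S.inv_rot_cubed] at h

theorem commute_s2_unitTranslation : Commute S.s2 S.unitTranslation :=
  S.commute_s2_rot_cubed.mul_right (S.commute_s0_s2.symm.mul_right (Commute.refl _))

theorem inv_unitTranslation : S.unitTranslation⁻¹ = S.s0 * S.s2 * S.rot ^ 3 := by
  rw [unitTranslation, mul_inv_rev, mul_inv_rev, S.inv_s0, S.inv_s2, S.inv_rot_cubed,
    S.commute_s0_s2.eq]

theorem semiconjBy_rot_cubed_unitTranslation :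
    SemiconjBy (S.rot ^ 3) S.unitTranslation S.unitTranslation⁻¹ := by
  rw [SemiconjBy, S.inv_unitTranslation, unitTranslation, ← mul_assoc, ← pow_add, mul_assoc,
    ← pow_add, show S.rot ^ (3 + 3) = 1 from S.s1_mul_s2_pow_six, one_mul, mul_one]

theorem braid : S.s0 * S.s1 * S.s0 = S.s1 * S.s0 * S.s1 := by
  rw [← inv_inj, inv_eq_iff_mul_eq_one]
  simpa only [pow_succ, pow_zero, one_mul, mul_inv_rev, inv_inv, S.inv_s0, S.inv_s1, mul_assoc]
    using S.s0_mul_s1_pow_three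

theorem unitTranslation_mul_rot_sq_mul_unitTranslation :
    S.unitTranslation * S.rot ^ 2 * S.unitTranslation = S.rot * S.unitTranslation * S.rot := by
  calc S.unitTranslation * S.rot ^ 2 * S.unitTranslation
      = S.rot ^ 3 * S.s0 * S.s2 * (S.rot ^ 2 * S.rot ^ 3) * (S.s0 * S.s2) := by
        simp only [unitTranslation, mul_assoc]
    _ = S.rot ^ 3 * S.s0 * (S.s2 * S.s2) * S.s1 * S.s0 * S.s2 := by
        simp only [← pow_add, S.rot_pow_five, mul_assoc]
    _ = S.rot ^ 3 * (S.s0 * S.s1 * S.s0) * S.s2 := by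
        simp only [S.s2_mul_s2, mul_one, mul_assoc]
    _ = S.rot ^ 3 * S.s1 * ((S.s2 * S.s2) * S.s0) * S.s1 * S.s2 := by
        simp only [S.braid, S.s2_mul_s2, one_mul, mul_assoc]
    _ = S.rot ^ 3 * S.rot * (S.s0 * S.s2) * S.rot := by
        simp only [rot, S.commute_s0_s2.eq, mul_assoc]
    _ = S.rot * S.unitTranslation * S.rot := by
        rw [← pow_succ, pow_succ' S.rot 3]
        simp only [unitTranslation, mul_assoc]

theorem semiconjBy_rot_unitTranslation :
    SemiconjBy S.rot S.unitTranslation S.rotatedTranslation :=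
  SemiconjBy.conj_mk ..

theorem semiconjBy_rot_rotatedTranslation :
    SemiconjBy S.rot S.rotatedTranslation (S.unitTranslation⁻¹ * S.rotatedTranslation) := by
  unfold rotatedTranslation
  have key := S.unitTranslation_mul_rot_sq_mul_unitTranslation
  set T := S.unitTranslation
  calc S.rot * (S.rot * T * S.rot⁻¹)
      = T⁻¹ * (T * S.rot ^ 2 * T) * S.rot⁻¹ := by rw [pow_two]; group
    _ = T⁻¹ * (S.rot * T * S.rot) * S.rot⁻¹ := by rw [key]
    _ = T⁻¹ * (S.rot * T * S.rot⁻¹) * S.rot := by group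

theorem commute_unitTranslation_rotatedTranslation :
    Commute S.unitTranslation S.rotatedTranslation := by
  set T := S.unitTranslation
  set U := S.rotatedTranslation
  have rot_T : SemiconjBy S.rot T U := S.semiconjBy_rot_unitTranslation
  have rot_U : SemiconjBy S.rot U (T⁻¹ * U) := S.semiconjBy_rot_rotatedTranslation
  have rot_cubed_T : SemiconjBy (S.rot ^ 3) T (U⁻¹ * (T⁻¹ * U)) := by
    rw [pow_succ, pow_two]
    exact ((rot_T.inv_right.mul_right rot_U).mul_left rot_U).mul_left rot_T
  have inv_T_eq : T⁻¹ = U⁻¹ * (T⁻¹ * U) :=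
    mul_right_cancel (S.semiconjBy_rot_cubed_unitTranslation.eq.symm.trans rot_cubed_T.eq)
  exact (Commute.inv_right_iff.1 (eq_inv_mul_iff_mul_eq.1 inv_T_eq)).symm

theorem semiconjBy_s2_rotatedTranslation :
    SemiconjBy S.s2 S.rotatedTranslation (S.unitTranslation * S.rotatedTranslation⁻¹) := by
  set T := S.unitTranslation
  set U := S.rotatedTranslation
  have inv_rot_T : SemiconjBy S.rot⁻¹ T (T * U⁻¹) := by
    have h := S.semiconjBy_rot_unitTranslation.mul_right
      S.semiconjBy_rot_rotatedTranslation.inv_right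
    rwa [mul_inv_rev, inv_inv, mul_inv_cancel_left, ← SemiconjBy.inv_symm_left_iff] at h
  have s2_rot : SemiconjBy S.s2 S.rot S.rot⁻¹ :=
    semiconjBy_mul_of_involutions S.s1_mul_s1 S.s2_mul_s2
  calc S.s2 * (S.rot * T * S.rot⁻¹)
      = S.rot⁻¹ * T * S.rot * S.s2 := by
        rw [← mul_assoc, ← mul_assoc, s2_rot.eq, mul_assoc _ S.s2 T,
          S.commute_s2_unitTranslation.eq, ← mul_assoc, mul_assoc _ S.s2, s2_rot.inv_right.eq,
          inv_inv, ← mul_assoc]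
    _ = T * U⁻¹ * S.s2 := by rw [inv_rot_T.eq, inv_mul_cancel_right]

theorem translation_mul (x y x' y' : ℤ) :
    S.translation x y * S.translation x' y' = S.translation (x + x') (y + y') := by
  rw [translation, translation, translation, zpow_add, zpow_add,
    (S.commute_unitTranslation_rotatedTranslation.symm.zpow_zpow y x').mul_mul_mul_comm]

theorem translation_zero_right (x : ℤ) : S.translation x 0 = S.unitTranslation ^ x := by
  rw [translation, zpow_zero, mul_one]

theorem translation_zero : S.translation 0 0 = 1 := by
  rw [S.translation_zero_right, zpow_zero]

theorem inv_translation (x y : ℤ) : (S.translation x y)⁻¹ = S.translation (-x) (-y) :=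
  inv_eq_of_mul_eq_one_left (by
    rw [S.translation_mul, neg_add_cancel, neg_add_cancel, S.translation_zero])

theorem semiconjBy_rot_translation (x y : ℤ) :
    SemiconjBy S.rot (S.translation x y) (S.translation (-y) (x + y)) := by
  have h := (S.semiconjBy_rot_unitTranslation.zpow_right x).mul_right
    (S.semiconjBy_rot_rotatedTranslation.zpow_right y)
  rwa [S.commute_unitTranslation_rotatedTranslation.inv_left.mul_zpow, inv_zpow',
    ((S.commute_unitTranslation_rotatedTranslation.symm).zpow_zpow x (-y)).left_comm,
    ← zpow_add] at h

theorem semiconjBy_s2_translation (x y : ℤ) :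
    SemiconjBy S.s2 (S.translation x y) (S.translation (x + y) (-y)) := by
  have h := SemiconjBy.mul_right (S.commute_s2_unitTranslation.zpow_right x)
    (S.semiconjBy_s2_rotatedTranslation.zpow_right y)
  rwa [S.commute_unitTranslation_rotatedTranslation.inv_right.mul_zpow, inv_zpow', ← mul_assoc,
    ← zpow_add] at h

theorem semiconjBy_s1_translation (x y : ℤ) :
    SemiconjBy S.s1 (S.translation x y) (S.translation y x) := by
  have h := (S.semiconjBy_rot_translation (x + y) (-y)).mul_left (S.semiconjBy_s2_translation x y)
  rwa [rot, mul_assoc, S.s2_mul_s2, mul_one, neg_neg, add_neg_cancel_right] at h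

theorem semiconjBy_rot_sq_translation (x y : ℤ) :
    SemiconjBy (S.rot ^ 2) (S.translation x y) (S.translation (-x - y) x) := by
  have h := (S.semiconjBy_rot_translation (-y) (x + y)).mul_left (S.semiconjBy_rot_translation x y)
  rwa [← pow_two, neg_add', neg_add_cancel_comm_assoc] at h

theorem semiconjBy_rot_cubed_translation (x y : ℤ) :
    SemiconjBy (S.rot ^ 3) (S.translation x y) (S.translation (-x) (-y)) := by
  have h := (S.semiconjBy_rot_sq_translation (-y) (x + y)).mul_left
    (S.semiconjBy_rot_translation x y)
  rwa [← pow_succ, neg_neg, sub_add_cancel_right] at h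

/-- The lattice of translations. -/
def translations : Subgroup G where
  carrier := {g | ∃ x y, S.translation x y = g}
  mul_mem' := by
    rintro _ _ ⟨x, y, rfl⟩ ⟨x', y', rfl⟩
    exact ⟨_, _, (S.translation_mul x y x' y').symm⟩
  one_mem' := ⟨0, 0, S.translation_zero⟩
  inv_mem' := by
    rintro _ ⟨x, y, rfl⟩
    exact ⟨_, _, (S.inv_translation x y).symm⟩

theorem unitTranslation_mem_translations : S.unitTranslation ∈ S.translations :=
  ⟨1, 0, by rw [S.translation_zero_right, zpow_one]⟩

/-- The dihedral group generated by `s1` and `s2`, which fixes the base vertex. -/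
def pointGroup : DihedralGroup 6 →* G :=
  dihedralLift S.s1 S.s2 S.s1_mul_s1 S.s2_mul_s2 S.s1_mul_s2_pow_six

theorem pointGroup_r_natCast (n : ℕ) : S.pointGroup (.r n) = S.rot ^ n := by
  have h := dihedralLift_r_intCast S.s1_mul_s1 S.s2_mul_s2 S.s1_mul_s2_pow_six n
  rwa [Int.cast_natCast, zpow_natCast] at h

theorem pointGroup_sr_zero : S.pointGroup (.sr 0) = S.s2 :=
  dihedralLift_sr_zero ..

theorem pointGroup_sr_three : S.pointGroup (.sr 3) = S.rot ^ 3 * S.s2 := by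
  rw [← S.pointGroup_r_natCast, ← S.pointGroup_sr_zero, ← map_mul, DihedralGroup.r_mul_sr]
  congr 2

theorem range_pointGroup_le_normalizer_translations :
    S.pointGroup.range ≤ Subgroup.normalizer S.translations := by
  have mem_of_involution {g : G} (hg : g * g = 1)
      (conj_mem : ∀ t ∈ S.translations, g * t * g⁻¹ ∈ S.translations) :
      g ∈ Subgroup.normalizer S.translations := by
    refine Subgroup.mem_normalizer_iff.2 fun t => ⟨conj_mem t, fun ht => ?_⟩
    have conj_conj : g * (g * t * g⁻¹) * g⁻¹ = g * g * t * (g * g)⁻¹ := by group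
    simpa only [conj_conj, hg, one_mul, inv_one, mul_one] using conj_mem _ ht
  rw [pointGroup, range_dihedralLift, Subgroup.closure_le]
  rintro _ (rfl | rfl)
  · refine mem_of_involution S.s1_mul_s1 ?_
    rintro _ ⟨x, y, rfl⟩
    exact ⟨_, _, eq_mul_inv_of_mul_eq (S.semiconjBy_s1_translation x y).eq.symm⟩
  · refine mem_of_involution S.s2_mul_s2 ?_
    rintro _ ⟨x, y, rfl⟩
    exact ⟨_, _, eq_mul_inv_of_mul_eq (S.semiconjBy_s2_translation x y).eq.symm⟩

/-- An isometry has linear part `d` if it is a translation composed with the element `d` of the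
point group. -/
def HasLinearPart (g : G) (d : DihedralGroup 6) : Prop :=
  g * (S.pointGroup d)⁻¹ ∈ S.translations

variable {S} {g h : G} {d e : DihedralGroup 6}

theorem HasLinearPart.mul (hg : S.HasLinearPart g d) (hh : S.HasLinearPart h e) :
    S.HasLinearPart (g * h) (d * e) := by
  have normalizes := S.range_pointGroup_le_normalizer_translations ⟨d, rfl⟩
  rw [HasLinearPart, map_mul]
  convert mul_mem hg ((Subgroup.mem_normalizer_iff.1 normalizes _).1 hh) using 1
  group

theorem hasLinearPart_one_of_mem (hg : g ∈ S.translations) : S.HasLinearPart g 1 := by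
  rwa [HasLinearPart, map_one, inv_one, mul_one]

variable (S) in
theorem hasLinearPart_pointGroup (d : DihedralGroup 6) : S.HasLinearPart (S.pointGroup d) d := by
  rw [HasLinearPart, mul_inv_cancel]
  exact one_mem _

theorem HasLinearPart.pow (hg : S.HasLinearPart g d) (n : ℕ) : S.HasLinearPart (g ^ n) (d ^ n) := by
  induction n with
  | zero => rw [pow_zero, pow_zero]; exact hasLinearPart_one_of_mem (one_mem _)
  | succ n ih => rw [pow_succ, pow_succ]; exact ih.mul hg

theorem HasLinearPart.exists_eq_translation_mul (hg : S.HasLinearPart g d) :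
    ∃ x y, g = S.translation x y * S.pointGroup d :=
  let ⟨x, y, h⟩ := hg
  ⟨x, y, (inv_mul_eq_iff_eq_mul.1 (by rw [h]; group))⟩

theorem unitTranslation_inv_mul_rot_sq : S.unitTranslation⁻¹ * S.rot ^ 2 = S.s0 * S.s1 := by
  rw [S.inv_unitTranslation, mul_assoc, ← pow_add, S.rot_pow_five, mul_assoc, ← mul_assoc S.s2,
    S.s2_mul_s2, one_mul]

theorem semiconjBy_translation_mul_rot_sq (s t x y : ℤ) :
    SemiconjBy (S.translation s t) (S.translation x y * S.rot ^ 2)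
      (S.translation (x + 2 * s + t) (y + t - s) * S.rot ^ 2) := by
  rw [SemiconjBy, mul_assoc _ (S.rot ^ 2), (S.semiconjBy_rot_sq_translation s t).eq, ← mul_assoc,
    ← mul_assoc, S.translation_mul, S.translation_mul]
  congr 2 <;> ring

theorem semiconjBy_translation_mul_rot_cubed (s t x y : ℤ) :
    SemiconjBy (S.translation s t) (S.translation x y * S.rot ^ 3)
      (S.translation (x + 2 * s) (y + 2 * t) * S.rot ^ 3) := by
  rw [SemiconjBy, mul_assoc _ (S.rot ^ 3), (S.semiconjBy_rot_cubed_translation s t).eq,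
    ← mul_assoc, ← mul_assoc, S.translation_mul, S.translation_mul]
  congr 2 <;> ring

theorem semiconjBy_rot_translation_mul_rot_pow (x y : ℤ) (n : ℕ) :
    SemiconjBy S.rot (S.translation x y * S.rot ^ n) (S.translation (-y) (x + y) * S.rot ^ n) :=
  (S.semiconjBy_rot_translation x y).mul_right (Commute.self_pow S.rot n)

theorem semiconjBy_rot_cubed_s0_mul_s2 :
    SemiconjBy (S.rot ^ 3) (S.s0 * S.s2) (S.unitTranslation * S.rot ^ 3) := by
  rw [SemiconjBy, mul_assoc S.unitTranslation, ← pow_add,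
    show S.rot ^ (3 + 3) = 1 from S.s1_mul_s2_pow_six, mul_one, unitTranslation]

theorem semiconjBy_rot_cubed_mul_s2_unitTranslation :
    SemiconjBy (S.rot ^ 3 * S.s2) S.unitTranslation S.unitTranslation⁻¹ :=
  S.semiconjBy_rot_cubed_unitTranslation.mul_left S.commute_s2_unitTranslation

theorem semiconjBy_rot_s1 : SemiconjBy S.rot S.s1 (S.rot ^ 3 * S.s2) := by
  have rot_mul_s2 : S.rot * S.s2 = S.s1 := by rw [rot, mul_assoc, S.s2_mul_s2, mul_one]
  have s1_mul_rot : S.s1 * S.rot = S.s2 := by rw [rot, ← mul_assoc, S.s1_mul_s1, one_mul]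
  calc S.rot * S.s1
      = S.rot * (S.rot * S.s2) := by rw [rot_mul_s2]
    _ = S.rot ^ 2 * (S.s1 * S.rot) := by rw [s1_mul_rot, pow_two, mul_assoc]
    _ = S.rot ^ 3 * S.s2 * S.rot := by rw [← rot_mul_s2]; simp only [pow_succ, mul_assoc]

end Lattice

section Action

open MulAction

variable {G α : Type*} [Group G] (S : TriangleSystem G) [MulAction G α]

variable (α) in
/-- No flag is fixed by a reflection exchanging two flags of a face, or by a nontrivial rotation of
a face, an edge or a vertex. Of the vertex rotations only those of prime order are listed. -/
structure IsFreeOnCorners : Prop where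
  s0 : fixedBy α S.s0 = ∅
  s1 : fixedBy α S.s1 = ∅
  faceRotation : fixedBy α (S.s0 * S.s1) = ∅
  halfTurn : fixedBy α (S.s0 * S.s2) = ∅
  rot_sq : fixedBy α (S.rot ^ 2) = ∅
  rot_cubed : fixedBy α (S.rot ^ 3) = ∅

variable {S}

theorem IsFreeOnCorners.fixedBy_translation_mul_rot_sq (hS : S.IsFreeOnCorners α) (x y : ℤ) :
    fixedBy α (S.translation x y * S.rot ^ 2) = ∅ := by
  have neg_one : fixedBy α (S.translation (-1) 0 * S.rot ^ 2) = ∅ := by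
    rw [S.translation_zero_right, zpow_neg_one, S.unitTranslation_inv_mul_rot_sq]
    exact hS.faceRotation
  obtain ⟨s, hs | hs | hs⟩ : ∃ s, x - y + 3 * s = 0 ∨ x - y + 3 * s = 1 ∨ x - y + 3 * s = -1 :=
    ⟨-((x - y + 1) / 3), by omega⟩
  all_goals
    rw [fixedBy_eq_empty_iff_of_semiconjBy (S.semiconjBy_translation_mul_rot_sq s (s - y) x y),
      show x + 2 * s + (s - y) = x - y + 3 * s by ring, show y + (s - y) - s = 0 by ring, hs]
  · simpa only [S.translation_zero, one_mul] using hS.rot_sq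
  · have conj := (S.semiconjBy_rot_cubed_translation 1 0).mul_right
      (Commute.pow_pow_self S.rot 3 2)
    rw [fixedBy_eq_empty_iff_of_semiconjBy conj]
    exact neg_one
  · exact neg_one

theorem IsFreeOnCorners.fixedBy_translation_mul_rot_cubed (hS : S.IsFreeOnCorners α) (x y : ℤ) :
    fixedBy α (S.translation x y * S.rot ^ 3) = ∅ := by
  have rotate (x y : ℤ) : fixedBy α (S.translation x y * S.rot ^ 3) = ∅ ↔
      fixedBy α (S.translation (-y) (x + y) * S.rot ^ 3) = ∅ :=
    fixedBy_eq_empty_iff_of_semiconjBy (S.semiconjBy_rot_translation_mul_rot_pow x y 3)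
  have zero_zero : fixedBy α (S.translation 0 0 * S.rot ^ 3) = ∅ := by
    rw [S.translation_zero, one_mul]
    exact hS.rot_cubed
  have one_zero : fixedBy α (S.translation 1 0 * S.rot ^ 3) = ∅ := by
    rw [S.translation_zero_right, zpow_one,
      ← fixedBy_eq_empty_iff_of_semiconjBy S.semiconjBy_rot_cubed_s0_mul_s2]
    exact hS.halfTurn
  have zero_one := (rotate 1 0).1 one_zero
  have neg_one_one := (rotate 0 1).1 zero_one
  have of_congr (u v s t : ℤ) (hx : x = u + 2 * s) (hy : y = v + 2 * t)
      (h : fixedBy α (S.translation u v * S.rot ^ 3) = ∅) :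
      fixedBy α (S.translation x y * S.rot ^ 3) = ∅ := by
    rw [hx, hy]
    exact (fixedBy_eq_empty_iff_of_semiconjBy
      (S.semiconjBy_translation_mul_rot_cubed s t u v)).1 h
  obtain ⟨s, hs | hs⟩ := Int.even_or_odd' x <;> obtain ⟨t, ht | ht⟩ := Int.even_or_odd' y
  · exact of_congr 0 0 s t (by omega) (by omega) zero_zero
  · exact of_congr _ _ s t (by omega) (by omega) zero_one
  · exact of_congr _ _ s t (by omega) (by omega) one_zero
  · exact of_congr _ _ (s + 1) t (by omega) (by omega) neg_one_one

theorem IsFreeOnCorners.eq_zero_of_hasLinearPart_r (hS : S.IsFreeOnCorners α) {g : G} {f : α}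
    {j : ZMod 6} (hg : S.HasLinearPart g (.r j)) (hf : g • f = f) : j = 0 := by
  by_contra hj
  have pow_fixes (n : ℕ) : f ∈ fixedBy α (g ^ n) := by
    simpa using mem_fixedBy_zpow (mem_fixedBy.2 hf) n
  have exists_mul_eq : ∀ j : ZMod 6, j ≠ 0 →
      ∃ n : Fin 4, j * (n : ℕ) = (2 : ℕ) ∨ j * (n : ℕ) = (3 : ℕ) := by
    decide
  obtain ⟨n, hn⟩ := exists_mul_eq j hj
  obtain ⟨x, y, hxy⟩ := (hg.pow n).exists_eq_translation_mul
  have fixes := pow_fixes n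
  rcases hn with hn | hn <;>
    rw [hxy, DihedralGroup.r_pow, hn, S.pointGroup_r_natCast] at fixes
  · rwa [hS.fixedBy_translation_mul_rot_sq] at fixes
  · rwa [hS.fixedBy_translation_mul_rot_cubed] at fixes

theorem IsFreeOnCorners.fixedBy_zpow_mul_rot_cubed_mul_s2 (hS : S.IsFreeOnCorners α) (k : ℤ) :
    fixedBy α (S.unitTranslation ^ k * (S.rot ^ 3 * S.s2)) = ∅ := by
  have involution : S.rot ^ 3 * S.s2 * (S.rot ^ 3 * S.s2) = 1 := by
    rw [S.commute_s2_rot_cubed.mul_mul_mul_comm, S.s2_mul_s2, ← pow_add, mul_one]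
    exact S.s1_mul_s2_pow_six
  have s0_mul : S.s0 * (S.rot ^ 3 * S.s2) = S.unitTranslation⁻¹ := by
    rw [S.inv_unitTranslation, mul_assoc, S.commute_s2_rot_cubed.eq]
  have inverts : SemiconjBy (S.rot ^ 3 * S.s2) S.unitTranslation⁻¹ S.unitTranslation := by
    rw [← SemiconjBy.inv_right_iff, inv_inv]
    exact S.semiconjBy_rot_cubed_mul_s2_unitTranslation
  have perpendicular : fixedBy α (S.rot ^ 3 * S.s2) = ∅ :=
    (fixedBy_eq_empty_iff_of_semiconjBy S.semiconjBy_rot_s1).1 hS.s1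
  have h := fixedBy_dihedralLift_sr S.s0_mul_s0 involution (pow_zero _) hS.s0 perpendicular
    (Int.cast k)
  rwa [dihedralLift_sr_intCast, s0_mul, (inverts.zpow_right k).eq] at h

variable (S) in
/-- A flag is axial if every glide reflection in its stabilizer has its axis parallel or
perpendicular to the base edge: the mirror of `sr 0` contains that edge and the mirror of `sr 3` is
perpendicular to it. -/
def IsAxial (f : α) : Prop :=
  ∀ g j, S.HasLinearPart g (.sr j) → g • f = f → j = 0 ∨ j = 3

theorem IsFreeOnCorners.exists_isAxial [Nonempty α] (hS : S.IsFreeOnCorners α) :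
    ∃ f : α, S.IsAxial f := by
  obtain ⟨f⟩ := ‹Nonempty α›
  by_cases has_glide : ∃ g j, S.HasLinearPart g (.sr j) ∧ g • f = f
  swap
  · exact ⟨f, fun g j hg hf => (has_glide ⟨g, j, hg, hf⟩).elim⟩
  obtain ⟨g, j, hg, hgf⟩ := has_glide
  have direction_unique {h : G} {i : ZMod 6} (hh : S.HasLinearPart h (.sr i)) (hhf : h • f = f) :
      i = j :=
    sub_eq_zero.1 (hS.eq_zero_of_hasLinearPart_r (hg.mul hh) (by rw [mul_smul, hhf, hgf]))
  have exists_rotation : ∀ j : ZMod 6, ∃ l, j - l - l = 0 ∨ j - l - l = 3 := by decide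
  obtain ⟨l, hl⟩ := exists_rotation j
  refine ⟨S.pointGroup (.r l) • f, fun h i hh hhf => ?_⟩
  have conj_linearPart := ((S.hasLinearPart_pointGroup (.r (-l))).mul hh).mul
    (S.hasLinearPart_pointGroup (.r l))
  have conj_fixes : (S.pointGroup (.r (-l)) * h * S.pointGroup (.r l)) • f = f := by
    rw [mul_smul, mul_smul, hhf, ← mul_smul, ← map_mul, DihedralGroup.r_mul_r, neg_add_cancel,
      DihedralGroup.r_zero, map_one, one_smul]
  have hi : i + l + l = j := by
    simpa only [DihedralGroup.r_mul_sr, DihedralGroup.sr_mul_r, sub_neg_eq_add] using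
      direction_unique conj_linearPart conj_fixes
  rwa [← hi, add_sub_cancel_right, add_sub_cancel_right] at hl

theorem IsAxial.unitTranslation_pow_smul (hS : S.IsFreeOnCorners α) {f : α} (hf : S.IsAxial f)
    {i n : ℕ} {d : DihedralGroup 6}
    (h : S.unitTranslation ^ (i + n) • f = S.pointGroup d • S.unitTranslation ^ i • f) :
    S.unitTranslation ^ n • f = f ∨ S.unitTranslation ^ n • f = S.s2 • f := by
  set T := S.unitTranslation
  set g := (T ^ (i + n))⁻¹ * S.pointGroup d * T ^ i with hg
  have g_smul : g • f = f := by rw [hg, mul_smul, mul_smul, ← h, inv_smul_smul]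
  have hT (m : ℕ) : T ^ m ∈ S.translations := pow_mem S.unitTranslation_mem_translations m
  have g_linearPart : S.HasLinearPart g d := by
    simpa only [one_mul, mul_one] using
      ((hasLinearPart_one_of_mem (inv_mem (hT (i + n)))).mul (S.hasLinearPart_pointGroup d)).mul
        (hasLinearPart_one_of_mem (hT i))
  have of_commute (hd : Commute (S.pointGroup d) T) : T ^ n • f = S.pointGroup d • f := by
    rw [pow_add, mul_smul, ← mul_smul (S.pointGroup d), (hd.pow_right i).eq, mul_smul] at h
    exact smul_left_cancel _ h
  rcases d with j | j
  · left
    obtain rfl := hS.eq_zero_of_hasLinearPart_r g_linearPart g_smul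
    simpa only [DihedralGroup.r_zero, map_one, one_smul] using
      of_commute (by rw [DihedralGroup.r_zero, map_one]; exact Commute.one_left T)
  · rcases hf g j g_linearPart g_smul with rfl | rfl
    · right
      rw [← S.pointGroup_sr_zero]
      exact of_commute (S.pointGroup_sr_zero ▸ S.commute_s2_unitTranslation)
    · have g_eq : g = T ^ (-(i + n : ℤ) - i) * (S.rot ^ 3 * S.s2) := by
        rw [hg, S.pointGroup_sr_three, mul_assoc,
          (S.semiconjBy_rot_cubed_mul_s2_unitTranslation.pow_right i).eq, ← mul_assoc,
          sub_eq_add_neg, zpow_add, zpow_neg, zpow_neg, inv_pow, ← Nat.cast_add, zpow_natCast,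
          zpow_natCast]
      rw [← mem_fixedBy, g_eq, hS.fixedBy_zpow_mul_rot_cubed_mul_s2] at g_smul
      exact g_smul.elim

theorem IsAxial.step_pow_smul (hS : S.IsFreeOnCorners α) {f : α} (hf : S.IsAxial f) {i n : ℕ}
    {d : DihedralGroup 6} (h : (S.rot ^ 3 * S.s0) ^ (i + n) • f =
      S.pointGroup d • (S.rot ^ 3 * S.s0) ^ i • f) :
    (S.rot ^ 3 * S.s0) ^ n • f = f ∨ (S.rot ^ 3 * S.s0) ^ n • f = S.s2 • f := by
  have s2_pow (m : ℕ) : S.s2 ^ m = S.pointGroup (.sr 0 ^ m) := by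
    rw [map_pow, S.pointGroup_sr_zero]
  have step_pow (m : ℕ) : (S.rot ^ 3 * S.s0) ^ m = S.s2 ^ m * S.unitTranslation ^ m := by
    rw [← S.commute_s2_unitTranslation.mul_pow, S.commute_s2_unitTranslation.eq, unitTranslation,
      mul_assoc, mul_assoc, S.s2_mul_s2, mul_one]
  have returns : S.unitTranslation ^ n • f = f ∨ S.unitTranslation ^ n • f = S.s2 • f := by
    refine hf.unitTranslation_pow_smul hS (i := i) (d := (.sr 0 ^ (i + n))⁻¹ * d * .sr 0 ^ i) ?_
    rw [step_pow, step_pow, mul_smul, ← eq_inv_smul_iff] at h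
    simp only [h, map_mul, map_inv, mul_smul, s2_pow]
  have s2_pow_eq : S.s2 ^ n = 1 ∨ S.s2 ^ n = S.s2 := by
    rw [pow_eq_pow_mod n ((pow_two S.s2).trans S.s2_mul_s2)]
    rcases n.mod_two_eq_zero_or_one with hn | hn <;> simp [hn]
  have s2_smul_s2_smul : S.s2 • S.s2 • f = f := by rw [← mul_smul, S.s2_mul_s2, one_smul]
  rcases s2_pow_eq with hs | hs <;> rcases returns with hT | hT <;>
    simp [step_pow, mul_smul, hs, hT, s2_smul_s2_smul]

end Action

end TriangleSystem

namespace PreMap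

open MulAction

variable {M : PreMap}

theorem vertexDeg_congr {f g : M.flag} (h : M.SameVertex f g) :
    M.vertexDeg f = M.vertexDeg g := by
  simp only [vertexDeg, SameVertex, show M.vertexOfFlag f = M.vertexOfFlag g from h]

theorem faceDeg_congr {f g : M.flag} (h : M.SameFace f g) : M.faceDeg f = M.faceDeg g := by
  simp only [faceDeg, SameFace, show M.faceOfFlag f = M.faceOfFlag g from h]

theorem faceDeg_s1 (f : M.flag) : M.faceDeg (M.s1 f) = M.faceDeg f :=
  faceDeg_congr (Quot.sound (r := M.fRel) (Or.inr rfl)).symm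

namespace IsClosedSurfaceMap

variable (hM : M.IsClosedSurfaceMap)
include hM

theorem s0_mul_s0 : M.s0 * M.s0 = 1 := Equiv.ext hM.2.1

theorem s1_mul_s1 : M.s1 * M.s1 = 1 := Equiv.ext hM.2.2.1

theorem s2_mul_s2 : M.s2 * M.s2 = 1 := Equiv.ext hM.2.2.2.1

theorem fixedBy_s0 : fixedBy M.flag M.s0 = ∅ :=
  Set.eq_empty_iff_forall_notMem.2 hM.2.2.2.2.1

theorem fixedBy_s1 : fixedBy M.flag M.s1 = ∅ :=
  Set.eq_empty_iff_forall_notMem.2 hM.2.2.2.2.2.1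

theorem fixedBy_s2 : fixedBy M.flag M.s2 = ∅ :=
  Set.eq_empty_iff_forall_notMem.2 hM.2.2.2.2.2.2.1

theorem commute_s0_s2 : Commute M.s0 M.s2 := Equiv.ext hM.2.2.2.2.2.2.2.1

theorem fixedBy_s0_mul_s2 : fixedBy M.flag (M.s0 * M.s2) = ∅ :=
  Set.eq_empty_iff_forall_notMem.2 hM.2.2.2.2.2.2.2.2.1

theorem vertexDeg_eq_minimalPeriod (f : M.flag) :
    M.vertexDeg f = Function.minimalPeriod (M.s1 * M.s2) f :=
  Nat.div_eq_of_eq_mul_right two_pos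
    (nat_card_quot_mk_eq hM.s1_mul_s1 hM.s2_mul_s2 hM.fixedBy_s1 hM.fixedBy_s2 f)

theorem faceDeg_eq_minimalPeriod (f : M.flag) :
    M.faceDeg f = Function.minimalPeriod (M.s0 * M.s1) f :=
  Nat.div_eq_of_eq_mul_right two_pos
    (nat_card_quot_mk_eq hM.s0_mul_s0 hM.s1_mul_s1 hM.fixedBy_s0 hM.fixedBy_s1 f)

variable {L : List ℕ} (hL : M.HasVertexType L)
include hL

theorem minimalPeriod_s1_mul_s2 (f : M.flag) :
    Function.minimalPeriod (M.s1 * M.s2) f = L.length := by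
  obtain ⟨g, hfg, hdeg, -⟩ := hL f
  rw [← hM.vertexDeg_eq_minimalPeriod, vertexDeg_congr hfg, hdeg]

theorem faceDeg_mem (f : M.flag) : M.faceDeg f ∈ L := by
  obtain ⟨g, hfg, -, faceDeg_rot⟩ := hL f
  have period := hM.minimalPeriod_s1_mul_s2 hL g
  have period_pos : 0 < L.length := by
    rw [← period]
    exact Nat.pos_of_ne_zero (minimalPeriod_pos (a := M.s1 * M.s2) (b := g)).ne
  have faceDeg_zpow (k : ℤ) : M.faceDeg (((M.s1 * M.s2) ^ k) g) ∈ L := by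
    obtain ⟨i, hi⟩ := Int.eq_ofNat_of_zero_le
      (Int.emod_nonneg k (Int.natCast_ne_zero.2 period_pos.ne'))
    have i_lt : i < L.length := by
      have := Int.emod_lt_of_pos k (Int.natCast_pos.2 period_pos)
      omega
    have reduce : ((M.s1 * M.s2) ^ i) g = ((M.s1 * M.s2) ^ k) g := by
      have h := zpow_smul_mod_minimalPeriod (M.s1 * M.s2) g k
      change _ ^ (k % ((Function.minimalPeriod (M.s1 * M.s2) g : ℕ) : ℤ)) • g = _ at h
      rwa [period, hi, zpow_natCast] at h
    rw [← reduce, faceDeg_rot ⟨i, i_lt⟩]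
    exact L.get_mem _
  obtain ⟨k, rfl | rfl⟩ :=
    (quot_mk_eq_iff_exists_zpow hM.s1_mul_s1 hM.s2_mul_s2 g f).1 hfg.symm
  · exact faceDeg_zpow k
  · have eq_s1 : M.s2 (((M.s1 * M.s2) ^ k) g) = M.s1 (((M.s1 * M.s2) ^ (1 + k)) g) := by
      rw [zpow_one_add]
      exact (hM.2.2.1 _).symm
    rw [eq_s1, faceDeg_s1]
    exact faceDeg_zpow _

end IsClosedSurfaceMap

section Triangular

variable (hM : M.IsClosedSurfaceMap) (h6 : M.HasVertexType [3, 3, 3, 3, 3, 3])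
include hM h6

theorem s0_mul_s1_pow_smul_eq_iff (f : M.flag) (n : ℕ) :
    (M.s0 * M.s1) ^ n • f = f ↔ 3 ∣ n := by
  rw [pow_smul_eq_iff_minimalPeriod_dvd]
  change Function.minimalPeriod (M.s0 * M.s1) f ∣ n ↔ _
  have mem := hM.faceDeg_mem h6 f
  rw [← hM.faceDeg_eq_minimalPeriod, show M.faceDeg f = 3 by simpa using mem]

theorem s1_mul_s2_pow_smul_eq_iff (f : M.flag) (n : ℕ) :
    (M.s1 * M.s2) ^ n • f = f ↔ 6 ∣ n := by
  rw [pow_smul_eq_iff_minimalPeriod_dvd]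
  exact (hM.minimalPeriod_s1_mul_s2 h6 f).symm ▸ Iff.rfl

/-- The flag involutions of a map of type `{3^6}`, as generators of a quotient of the symmetry group
of the triangular lattice. -/
def triangleSystem : TriangleSystem (Equiv.Perm M.flag) where
  s0 := M.s0
  s1 := M.s1
  s2 := M.s2
  s0_mul_s0 := hM.s0_mul_s0
  s1_mul_s1 := hM.s1_mul_s1
  s2_mul_s2 := hM.s2_mul_s2
  commute_s0_s2 := hM.commute_s0_s2
  s0_mul_s1_pow_three := Equiv.ext fun f => (s0_mul_s1_pow_smul_eq_iff hM h6 f 3).2 dvd_rfl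
  s1_mul_s2_pow_six := Equiv.ext fun f => (s1_mul_s2_pow_smul_eq_iff hM h6 f 6).2 dvd_rfl

theorem isFreeOnCorners_triangleSystem : (triangleSystem hM h6).IsFreeOnCorners M.flag where
  s0 := hM.fixedBy_s0
  s1 := hM.fixedBy_s1
  faceRotation := Set.eq_empty_iff_forall_notMem.2 fun f hf =>
    absurd ((s0_mul_s1_pow_smul_eq_iff hM h6 f 1).1 (by rwa [pow_one])) (by decide)
  halfTurn := hM.fixedBy_s0_mul_s2
  rot_sq := Set.eq_empty_iff_forall_notMem.2 fun f hf =>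
    absurd ((s1_mul_s2_pow_smul_eq_iff hM h6 f 2).1 hf) (by decide)
  rot_cubed := Set.eq_empty_iff_forall_notMem.2 fun f hf =>
    absurd ((s1_mul_s2_pow_smul_eq_iff hM h6 f 3).1 hf) (by decide)

theorem SameVertex.exists_pointGroup_smul_eq {f g : M.flag} (h : M.SameVertex f g) :
    ∃ d, (triangleSystem hM h6).pointGroup d • f = g :=
  (quot_mk_eq_iff_exists_dihedralLift _ _ (triangleSystem hM h6).s1_mul_s2_pow_six f g).1 h

end Triangular

theorem exists_isCycleTypeA_of_sameVertex_imp {f : M.flag}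
    (closes : ∀ i n, M.SameVertex ((M.stepA ^ i) f) ((M.stepA ^ (i + n)) f) →
      (M.stepA ^ n) f = f ∨ (M.stepA ^ n) f = M.s2 f) :
    ∃ k, M.IsCycleTypeA k f := by
  classical
  let IsReturn (n : ℕ) : Prop := 1 ≤ n ∧ ((M.stepA ^ n) f = f ∨ (M.stepA ^ n) f = M.s2 f)
  have exists_return : ∃ n, IsReturn n :=
    ⟨orderOf M.stepA, orderOf_pos _, Or.inl (by rw [pow_orderOf_eq_one]; rfl)⟩
  set k := Nat.find exists_return
  have k_return : IsReturn k := Nat.find_spec exists_return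
  have not_lt {i j : ℕ} (hj : j < k)
      (h : M.SameVertex ((M.stepA ^ i) f) ((M.stepA ^ j) f)) : ¬ i < j := fun hij =>
    Nat.find_min exists_return (m := j - i) (by omega)
      ⟨by omega, closes i (j - i) (by rwa [Nat.add_sub_cancel' hij.le])⟩
  exact ⟨k, k_return.1, k_return.2, fun i j h =>
    Fin.ext (le_antisymm (Nat.not_lt.1 (not_lt i.2 h.symm)) (Nat.not_lt.1 (not_lt j.2 h)))⟩

end PreMap

theorem klein_36_cycleA_exists_general (M : PreMap) (hM : M.IsClosedSurfaceMap)
    (h6 : M.HasVertexType [3, 3, 3, 3, 3, 3]) :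
    ∃ (k : ℕ) (f : M.flag), M.IsCycleTypeA k f := by
  have free := PreMap.isFreeOnCorners_triangleSystem hM h6
  have := hM.1
  obtain ⟨f, axial⟩ := free.exists_isAxial
  obtain ⟨k, cycle⟩ := PreMap.exists_isCycleTypeA_of_sameVertex_imp (f := f) fun i n h =>
    let ⟨_, hd⟩ := h.exists_pointGroup_smul_eq hM h6
    axial.step_pow_smul free hd.symm
  exact ⟨k, f, cycle⟩

/-- Every semi-equivelar map `M` of type `{3^6}` on the Klein bottle
contains a cycle of type `A`. -/
theorem klein_36_cycleA_exists (M : PreMap) (hM : M.IsKleinBottleMap)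
    (h6 : M.HasVertexType [3, 3, 3, 3, 3, 3]) :
    ∃ (k : ℕ) (f : M.flag), M.IsCycleTypeA k f :=
  klein_36_cycleA_exists_general M hM.1 h6
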